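/- arXiv:2203.11607 — 2 statements merged into one kernel-verified Lean document; each statement's English description precedes it below -/
import Mathlib

section
/- Let μ be the Haar probability measure on the unitary group U(N) = {g ∈ Matrix (Fin N) (Fin N) ℂ : g*g = 1}. Let n, n' ∈ ℕ with n ≠ n'. Then for all index functions i, j : Fin n → Fin N and k, l : Fin n' → Fin N, ∫_{U(N)} (∏_{a=1}^{n} g_{i(a), j(a)}) · (∏_{b=1}^{n'} (g⁻¹)_{k(b), l(b)}) dμ(g) = 0. -/
/-!
The scalar matrix `z • 1` with `|z| = 1` is unitary, and left translation by it multiplies the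
integrand by `z ^ n * (conj z) ^ n'`. Choosing `z = exp (π i / (n - n'))` makes this factor `-1`,
so invariance of Haar measure forces the integral to equal its own negative.
-/

open MeasureTheory

/-- A phase of angle `π / (n - n')` gives the monomial `z ^ n * (conj z) ^ n'` the value `-1`. -/
lemma exists_phase_eq_neg_one {n n' : ℕ} (h : n ≠ n') :
    ∃ z : ℂ, star z * z = 1 ∧ z ^ n * star z ^ n' = -1 := by
  have hd : (n : ℂ) - n' ≠ 0 := sub_ne_zero.mpr (by exact_mod_cast h)
  have hs : star (Complex.exp (Real.pi * Complex.I / ((n : ℂ) - n')))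
      = Complex.exp (-(Real.pi * Complex.I / ((n : ℂ) - n'))) := by
    rw [Complex.star_def, ← Complex.exp_conj]
    simp [neg_div]
  refine ⟨Complex.exp (Real.pi * Complex.I / ((n : ℂ) - n')), ?_, ?_⟩
  · rw [hs, ← Complex.exp_add, neg_add_cancel, Complex.exp_zero]
  · rw [hs, ← Complex.exp_nat_mul, ← Complex.exp_nat_mul, ← Complex.exp_add,
      ← Complex.exp_pi_mul_I]
    congr 1
    field_simp
    ring

/-- Mixed matrix moments of a Haar-distributed unitary matrix vanish when the numbers of
factors of `g` and of `g⁻¹` differ: for the Haar probability measure `μ` on `U(N)` and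
`n ≠ n'`, `∫ (∏_a g_{i(a) j(a)}) (∏_b (g⁻¹)_{k(b) l(b)}) dμ(g) = 0`. -/
theorem unitary_mixed_moments_vanish (N : ℕ)
    [MeasurableSpace (Matrix.unitaryGroup (Fin N) ℂ)]
    [BorelSpace (Matrix.unitaryGroup (Fin N) ℂ)]
    (μ : Measure (Matrix.unitaryGroup (Fin N) ℂ))
    [μ.IsHaarMeasure] [IsProbabilityMeasure μ]
    (n n' : ℕ) (hnn' : n ≠ n')
    (i j : Fin n → Fin N) (k l : Fin n' → Fin N) :
    ∫ g : Matrix.unitaryGroup (Fin N) ℂ,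
      (∏ a : Fin n, (g : Matrix (Fin N) (Fin N) ℂ) (i a) (j a)) *
        (∏ b : Fin n',
          ((g⁻¹ : Matrix.unitaryGroup (Fin N) ℂ) : Matrix (Fin N) (Fin N) ℂ) (k b) (l b))
      ∂μ = 0 := by
  obtain ⟨z, hz, hw⟩ := exists_phase_eq_neg_one hnn'
  have hmem : z • (1 : Matrix (Fin N) (Fin N) ℂ) ∈ Matrix.unitaryGroup (Fin N) ℂ := by
    rw [Matrix.mem_unitaryGroup_iff', star_smul, star_one, smul_mul_smul_comm, hz, one_mul,
      one_smul]
  let u : Matrix.unitaryGroup (Fin N) ℂ := ⟨z • 1, hmem⟩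
  have hu (g : Matrix.unitaryGroup (Fin N) ℂ) :
      ((u * g : Matrix.unitaryGroup (Fin N) ℂ) : Matrix (Fin N) (Fin N) ℂ)
        = z • (g : Matrix (Fin N) (Fin N) ℂ) := by
    simp [u]
  have hu_inv (g : Matrix.unitaryGroup (Fin N) ℂ) :
      (((u * g)⁻¹ : Matrix.unitaryGroup (Fin N) ℂ) : Matrix (Fin N) (Fin N) ℂ)
        = star z • ((g⁻¹ : Matrix.unitaryGroup (Fin N) ℂ) : Matrix (Fin N) (Fin N) ℂ) := by
    rw [Matrix.UnitaryGroup.inv_val, Matrix.UnitaryGroup.inv_val, hu, star_smul]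
  refine self_eq_neg.mp ?_
  conv_lhs => rw [← integral_mul_left_eq_self _ u]
  rw [← integral_neg]
  refine integral_congr_ae (Filter.Eventually.of_forall fun g => ?_)
  simp only [hu, hu_inv, Matrix.smul_apply, smul_eq_mul, Finset.prod_mul_distrib,
    Finset.prod_const, Finset.card_univ, Fintype.card_fin]
  rw [mul_mul_mul_comm, hw, neg_one_mul]
end

section
/- Let N, n ∈ ℕ and let σ be a permutation of Fin n. Let P_σ be the square matrix over ℂ indexed by functions Fin n → Fin N with entries (P_σ)_{f,h} = ∏_{t ∈ Fin n} δ_{f(t), h(σ⁻¹(t))} (the matrix of the operator on (ℂ^N)^{⊗n} sending e_{j_1}⊗⋯⊗e_{j_n} to e_{j_{σ⁻¹(1)}}⊗⋯⊗e_{j_{σ⁻¹(n)}}). Then the trace of P_σ equals N^{c(σ)}, where c(σ) is the number of orbits of the action on Fin n of the subgroup generated by σ (i.e., the number of cycles of σ, counting fixed points as cycles). -/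
/-!
The diagonal entry of `P_σ` at `f` is `1` when `f` is invariant under `σ` and `0` otherwise, so the
trace counts the `σ`-invariant functions `Fin n → Fin N`. Such a function is the same thing as
a function on the quotient of `Fin n` by the orbit relation of `⟨σ⟩`, and there are
`N ^ c(σ)` of these.
-/

theorem apply_zpow_of_invariant {α β : Type*} {σ : Equiv.Perm α} {f : α → β}
    (hf : ∀ t, f t = f (σ⁻¹ t)) (k : ℤ) (t : α) : f ((σ ^ k) t) = f t := by
  induction k generalizing t with
  | zero => simp
  | succ i ih =>
    rw [zpow_add_one, Equiv.Perm.mul_apply, ih, hf (σ t)]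
    exact congrArg f (σ.symm_apply_apply t)
  | pred i ih =>
    rw [zpow_sub_one, Equiv.Perm.mul_apply, ih, ← hf t]

/-- Functions invariant under `σ` are exactly those that factor through the orbit quotient. -/
def invariantEquiv {α β : Type*} (σ : Equiv.Perm α) :
    {f : α → β // ∀ t, f t = f (σ⁻¹ t)} ≃
      (MulAction.orbitRel.Quotient (Subgroup.zpowers σ) α → β) where
  toFun f := fun q => Quotient.liftOn' q f.1 (by
    rintro a b ⟨⟨_, k, rfl⟩, rfl⟩
    exact apply_zpow_of_invariant f.2 k b)
  invFun g := ⟨fun t => g (Quotient.mk'' t), fun t => congrArg g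
    (Quotient.sound' ⟨⟨σ, Subgroup.mem_zpowers σ⟩, σ.apply_symm_apply t⟩)⟩
  left_inv _ := rfl
  right_inv g := by
    funext q
    induction q using Quotient.inductionOn'
    rfl

/-- The trace of the permutation operator `P_σ` on `(ℂ^N)^{⊗n}` equals `N^{c(σ)}`, where
`c(σ)` is the number of orbits of the subgroup generated by `σ` acting on `Fin n`
(the number of cycles of `σ`, counting fixed points as cycles). -/
theorem trace_permutation_matrix (N n : ℕ) (σ : Equiv.Perm (Fin n))
    (P : Matrix (Fin n → Fin N) (Fin n → Fin N) ℂ)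
    (hP : ∀ f h : Fin n → Fin N,
      P f h = ∏ t : Fin n, if f t = h (σ⁻¹ t) then (1 : ℂ) else 0) :
    P.trace =
      (N : ℂ) ^ Nat.card (MulAction.orbitRel.Quotient (Subgroup.zpowers σ) (Fin n)) := by
  have hdiag : ∀ f, P f f = if ∀ t, f t = f (σ⁻¹ t) then (1 : ℂ) else 0 := by
    intro f
    rw [hP, Finset.prod_ite_zero]
    simp only [Finset.mem_univ, true_imp_iff, Finset.prod_const_one]
  have hcard := Nat.card_congr (invariantEquiv (β := Fin N) σ)
  rw [Nat.card_fun, Nat.card_fin, Nat.card_eq_fintype_card, Fintype.card_subtype] at hcard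
  simp only [Matrix.trace, Matrix.diag_apply, hdiag]
  rw [Finset.sum_boole, hcard, Nat.cast_pow]
end
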